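/- Let T ≥ 1, δ ∈ (0,1), and L ≥ 0, and define f : ℝ → ℝ by f(x) = −(L/2)x², so f′(x) = −Lx. Let x^1, x^2, … ∈ [−1,1] satisfy x^1 = 0 and, for each t ≥ 1, x^{t+1} = Π_{[−1,1]}[c^t] for some c^t lying in the real linear span of {x^1, …, x^t, f′(x^1), …, f′(x^t)} (the linear span assumption). Then x^t = 0 for all t, and the Φ_Proj(δ)-regret against the constant loss sequence f^1 = ⋯ = f^T = f satisfies sup_{v ∈ [−δ, δ]} ∑_{t=1}^T ( f(x^t) − f(Π_{[−1,1]}[x^t − v]) ) ≥ δ²LT/2. -/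

import Mathlib

/-- The nearest-point projection of `ℝ` onto the interval `[−1, 1]`. -/
noncomputable def projIvl (z : ℝ) : ℝ := max (-1) (min 1 z)

/-! If `0` is a critical point of the loss, a linear-span algorithm started there only ever sees the
vector `0`, so it never moves. Every round then contributes the same displacement gain
`f 0 - f u`, which for `f x = -(L / 2) x²` and `u = δ` equals `L δ² / 2`. -/

section LinearSpan

variable {R E : Type*} [Semiring R] [AddCommMonoid E] [Module R E]

variable (R) in
/-- The linear span assumption for an online algorithm with iterates `x 1, x 2, …`: each new
iterate is the image under `P` (the projection onto the feasible set) of a linear combination of the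
previous iterates and of the gradients `g` of the fixed loss at them. The value `x 0` is ignored. -/
def LinearSpanIterates (P g : E → E) (x : ℕ → E) : Prop :=
  ∀ t, 1 ≤ t → ∃ c ∈ Submodule.span R (x '' Set.Icc 1 t ∪ (fun s => g (x s)) '' Set.Icc 1 t),
    x (t + 1) = P c

theorem LinearSpanIterates.eq_zero {P g : E → E} {x : ℕ → E} (hx : LinearSpanIterates R P g x)
    (hP : P 0 = 0) (hg : g 0 = 0) (hx1 : x 1 = 0) {t : ℕ} (ht : 1 ≤ t) : x t = 0 := by
  induction t using Nat.strong_induction_on with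
  | _ t ih =>
    rcases ht.eq_or_lt with rfl | one_lt
    · exact hx1
    · obtain ⟨s, rfl⟩ := Nat.exists_eq_add_of_lt one_lt
      obtain ⟨c, hc, hxc⟩ := hx (1 + s) (Nat.le_add_right 1 s)
      have previous_eq_zero : ∀ r ∈ Set.Icc 1 (1 + s), x r = 0 := fun r hr =>
        ih r (Nat.lt_succ_of_le hr.2) hr.1
      have span_eq_bot : Submodule.span R
          (x '' Set.Icc 1 (1 + s) ∪ (fun r => g (x r)) '' Set.Icc 1 (1 + s)) = ⊥ := by
        rw [Submodule.span_eq_bot]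
        rintro _ (⟨r, hr, rfl⟩ | ⟨r, hr, rfl⟩)
        · exact previous_eq_zero r hr
        · simp only [previous_eq_zero r hr, hg]
      rw [span_eq_bot, Submodule.mem_bot] at hc
      rw [hxc, hc, hP]

end LinearSpan

section Regret

variable {E : Type*} [AddGroup E]

/-- The regret over rounds `1, …, T` of the points `x t` under the losses `f t`, against projected
displacements `y ↦ P (y - v)` with `v ∈ V`. The `Φ_Proj(δ)`-regret is the case where `P` is the
projection onto the feasible set and `V` is the ball of radius `δ`. The supremum is real-valued,
hence `0` if it is unbounded or if `V` is empty. -/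
noncomputable def displacementRegret (P : E → E) (V : Set E) (f : ℕ → E → ℝ) (x : ℕ → E)
    (T : ℕ) : ℝ :=
  ⨆ v : V, ∑ t ∈ Finset.Icc 1 T, (f t (x t) - f t (P (x t - v)))

variable {P : E → E} {V : Set E} {v : E}

theorem sum_sub_le_displacementRegret {f : ℕ → E → ℝ} (hf : ∀ t, BddBelow (Set.range (f t ∘ P)))
    (x : ℕ → E) (T : ℕ) (hv : v ∈ V) :
    ∑ t ∈ Finset.Icc 1 T, (f t (x t) - f t (P (x t - v))) ≤ displacementRegret P V f x T := by
  choose m hm using hf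
  refine le_ciSup (f := fun v : V => ∑ t ∈ Finset.Icc 1 T, (f t (x t) - f t (P (x t - v))))
    ⟨∑ t ∈ Finset.Icc 1 T, (f t (x t) - m t), ?_⟩ ⟨v, hv⟩
  rintro _ ⟨w, rfl⟩
  exact Finset.sum_le_sum fun t _ => sub_le_sub_left (hm t ⟨x t - w, rfl⟩) _

theorem mul_sub_le_displacementRegret_of_eq_const {f : E → ℝ} (hf : BddBelow (Set.range (f ∘ P)))
    {x : ℕ → E} {a : E} (hx : ∀ t, 1 ≤ t → x t = a) (T : ℕ) (hv : v ∈ V) :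
    T * (f a - f (P (a - v))) ≤ displacementRegret P V (fun _ => f) x T :=
  calc T * (f a - f (P (a - v)))
      = ∑ _t ∈ Finset.Icc 1 T, (f a - f (P (a - v))) := by
        rw [Finset.sum_const, Nat.card_Icc, Nat.add_sub_cancel, nsmul_eq_mul]
    _ = ∑ t ∈ Finset.Icc 1 T, (f (x t) - f (P (x t - v))) :=
        Finset.sum_congr rfl fun t ht => by rw [hx t (Finset.mem_Icc.mp ht).1]
    _ ≤ displacementRegret P V (fun _ => f) x T :=
        sum_sub_le_displacementRegret (fun _ => hf) x T hv

end Regret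

theorem projIvl_eq_projIcc (z : ℝ) :
    projIvl z = Set.projIcc (-1 : ℝ) 1 (by norm_num) z :=
  (Set.coe_projIcc ..).symm

theorem projIvl_mem_Icc (z : ℝ) : projIvl z ∈ Set.Icc (-1 : ℝ) 1 := by
  rw [projIvl_eq_projIcc]
  exact Subtype.property _

theorem projIvl_of_mem_Icc {z : ℝ} (hz : z ∈ Set.Icc (-1 : ℝ) 1) : projIvl z = z := by
  rw [projIvl_eq_projIcc, Set.projIcc_of_mem _ hz]

theorem bddBelow_range_comp_projIvl {f : ℝ → ℝ} (hf : ContinuousOn f (Set.Icc (-1) 1)) :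
    BddBelow (Set.range (f ∘ projIvl)) := by
  refine (isCompact_Icc.bddBelow_image hf).mono ?_
  rintro _ ⟨z, rfl⟩
  exact Set.mem_image_of_mem f (projIvl_mem_Icc z)

theorem hasDerivAt_neg_half_mul_sq (L y : ℝ) :
    HasDerivAt (fun z : ℝ => -(L / 2) * z ^ 2) (-(L * y)) y :=
  ((hasDerivAt_pow 2 y).const_mul (-(L / 2))).congr_deriv (by push_cast; ring)

theorem stmt_19_general {f f' : ℝ → ℝ}
    (hf : ∀ y ∈ Set.Icc (-1 : ℝ) 1, HasDerivWithinAt f (f' y) (Set.Icc (-1) 1) y)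
    (hf0 : f' 0 = 0) {x : ℕ → ℝ} (hx1 : x 1 = 0) (hx : LinearSpanIterates ℝ projIvl f' x)
    (T : ℕ) (δ : ℝ) :
    (∀ t, 1 ≤ t → x t = 0) ∧
    ∀ u ∈ Set.Icc (-1 : ℝ) 1 ∩ Set.Icc (-δ) δ,
      T * (f 0 - f u) ≤ displacementRegret projIvl (Set.Icc (-δ) δ) (fun _ => f) x T := by
  have iterates_eq_zero : ∀ t, 1 ≤ t → x t = 0 := fun t ht =>
    hx.eq_zero (projIvl_of_mem_Icc (by norm_num)) hf0 hx1 ht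
  refine ⟨iterates_eq_zero, fun u ⟨hu1, huδ⟩ => ?_⟩
  have bddBelow_loss := bddBelow_range_comp_projIvl fun y hy => (hf y hy).continuousWithinAt
  have neg_u_mem : -u ∈ Set.Icc (-δ) δ := ⟨neg_le_neg huδ.2, neg_le.mp huδ.1⟩
  simpa only [zero_sub, neg_neg, projIvl_of_mem_Icc hu1] using
    mul_sub_le_displacementRegret_of_eq_const bddBelow_loss iterates_eq_zero T neg_u_mem

/-- Let `T ≥ 1`, `δ ∈ (0,1)`, `L ≥ 0`, and `f(x) = −(L/2)x²`, so that
`f′(x) = −Lx`. If the iterates `x^t ∈ [−1,1]` satisfy `x^1 = 0` and the linear span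
assumption `x^{t+1} = Π_{[−1,1]}[c^t]` with
`c^t ∈ span ℝ {x^1, …, x^t, f′(x^1), …, f′(x^t)}`, then `x^t = 0` for all `t ≥ 1` and the
`Φ_Proj(δ)`-regret against the constant loss sequence `f` is at least `δ²LT/2`:
`sup_{v ∈ [−δ,δ]} ∑_{t=1}^T (f(x^t) − f(Π_{[−1,1]}[x^t − v])) ≥ δ²LT/2`. -/
theorem stmt_19 {T : ℕ} (hT : 1 ≤ T) {δ : ℝ} (hδ0 : 0 < δ) (hδ1 : δ < 1)
    {L : ℝ} (hL : 0 ≤ L)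
    {x : ℕ → ℝ} (hx1 : x 1 = 0) (hxmem : ∀ t, 1 ≤ t → x t ∈ Set.Icc (-1 : ℝ) 1)
    (hspan : ∀ t, 1 ≤ t → ∃ c ∈ Submodule.span ℝ
      ((fun s => x s) '' Set.Icc 1 t ∪ (fun s => -(L * x s)) '' Set.Icc 1 t),
      x (t + 1) = projIvl c) :
    (∀ t, 1 ≤ t → x t = 0) ∧
    δ ^ 2 * L * T / 2 ≤ ⨆ v : Set.Icc (-δ) δ,
      ∑ t ∈ Finset.Icc 1 T,
        (-(L / 2) * x t ^ 2 - -(L / 2) * projIvl (x t - (v : ℝ)) ^ 2) := by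
  obtain ⟨iterates_eq_zero, gain_le_regret⟩ := stmt_19_general
    (fun y _ => (hasDerivAt_neg_half_mul_sq L y).hasDerivWithinAt) (by ring) hx1 hspan T δ
  exact ⟨iterates_eq_zero, le_of_eq_of_le (by ring)
    (gain_le_regret δ ⟨⟨by linarith, hδ1.le⟩, by linarith, le_rfl⟩)⟩
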